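/- Let n ≥ 1 and d ≥ 1 be integers, let c ∈ ℝ^n have strictly positive entries c_p > 0, and let θ ∈ ℝ^d satisfy Σ_{j=1}^d max(θ_j, 0) > 0. Define H ∈ ℝ^{n×d} by H(p, j) = max(c_p·θ_j, 0) (i.e., H(p, :) = ReLU(c_p·θ)). Then for every p and j the row-normalized matrix satisfies Y(p, j) = max(θ_j, 0) / (Σ_{j'=1}^d max(θ_{j'}, 0)), independent of p; hence every column of Y is constant and the gating score α = Σ_{j=1}^d Var(Y(:, j)) equals 0. In particular, for the GCN expert under the all-ones input with ReLU activation, whose first-layer output has rows H^{(1)}_{GCN}(p, :) = ReLU(F_{pp}^{−1}·θ) with θ = 𝟙ᵀΘ and F a diagonal matrix with positive diagonal entries, the gating score is 0 whenever Σ_j max(θ_j, 0) > 0. -/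

import Mathlib

open Finset

/-- Empirical variance of `n` real values. -/
noncomputable def empVar {n : ℕ} (v : Fin n → ℝ) : ℝ :=
  (∑ p, (v p - (∑ q, v q) / n) ^ 2) / n

/-- Row normalization `Y(p, j) = H(p, j) / (Σ_{j'} H(p, j'))`. -/
noncomputable def rowNorm {n d : ℕ} (H : Fin n → Fin d → ℝ) (p : Fin n) (j : Fin d) : ℝ :=
  H p j / ∑ j', H p j'

/-- The variance-based gating score `α = Σ_j Var(Y(:, j))` of an expert with
first-layer output `H`. -/
noncomputable def gatingScore {n d : ℕ} (H : Fin n → Fin d → ℝ) : ℝ :=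
  ∑ j, empVar (fun p => rowNorm H p j)

/-- For the GCN expert under all-ones input with ReLU activation, whose first-layer
output has rows `H(p, :) = ReLU(c_p · θ)` with `c_p > 0`, the row-normalized matrix
satisfies `Y(p, j) = max(θ_j, 0)/Σ_{j'} max(θ_{j'}, 0)` independently of `p`, so every
column of `Y` is constant and the gating score vanishes. -/
theorem gcn_gatingScore_eq_zero
    (n d : ℕ) (hn : 1 ≤ n) (hd : 1 ≤ d)
    (c : Fin n → ℝ) (hc : ∀ p, 0 < c p)
    (θ : Fin d → ℝ) (hθ : 0 < ∑ j, max (θ j) 0)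
    (H : Fin n → Fin d → ℝ) (hH : ∀ p j, H p j = max (c p * θ j) 0) :
    (∀ (p : Fin n) (j : Fin d),
      rowNorm H p j = max (θ j) 0 / ∑ j', max (θ j') 0) ∧
    gatingScore H = 0 := by
  have key : ∀ (p : Fin n) (j : Fin d),
      rowNorm H p j = max (θ j) 0 / ∑ j', max (θ j') 0 := by
    intro p j
    have h : ∀ k, H p k = c p * max (θ k) 0 := by
      intro k
      rw [hH, mul_max_of_nonneg _ _ (hc p).le, mul_zero]
    unfold rowNorm
    simp only [h]
    rw [← Finset.mul_sum, mul_div_mul_left _ _ (hc p).ne']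
  refine ⟨key, ?_⟩
  have hn0 : (n : ℝ) ≠ 0 := by
    have : n ≠ 0 := by omega
    exact_mod_cast this
  unfold gatingScore
  apply Finset.sum_eq_zero
  intro j _
  unfold empVar
  simp only [key, Finset.sum_const, Finset.card_univ, Fintype.card_fin, nsmul_eq_mul]
  rw [mul_div_cancel_left₀ _ hn0, mul_div_cancel_left₀ _ hn0]
  simp
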